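/- Let s > −1/2 and k ∈ ℕ. Let v : [−1,1] → ℝ be such that there is a partition −1 = α_1 < α_2 < ⋯ < α_{n+1} = 1 and functions ṽ_i ∈ C^k[α_i,α_{i+1}] with v = ṽ_i on (α_i,α_{i+1}), and assume (when k ≥ 2) that v ∈ C^{k−2}[−1,1]. Then there exists a constant C > 0 (depending on v and k) such that |v_{j,s}| ≤ C j^{−k} for all j ≥ 1. -/

import Mathlib

open MeasureTheory Filter Set

/-- The Gegenbauer polynomials `C_n^{(λ)}`, defined by their three-term recurrence. -/
noncomputable def gegen (l : ℝ) : ℕ → ℝ → ℝ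
  | 0, _ => 1
  | 1, x => 2 * l * x
  | (n + 2), x =>
      (2 * x * ((n : ℝ) + 2 + l - 1) * gegen l (n + 1) x
        - ((n : ℝ) + 2 + 2 * l - 2) * gegen l n x) / ((n : ℝ) + 2)

/-- The normalization constant `h_j^{(s+1/2)}`. -/
noncomputable def hnorm (s : ℝ) (j : ℕ) : ℝ :=
  Real.sqrt (2 ^ (-(2 * s)) * Real.pi / (Real.Gamma (s + 1 / 2)) ^ 2 *
    (Real.Gamma ((j : ℝ) + 2 * s + 1) / (Real.Gamma ((j : ℝ) + 1) * ((j : ℝ) + s + 1 / 2))))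

/-- The normalized Gegenbauer polynomial `C̃_j^{(s+1/2)} = C_j^{(s+1/2)} / h_j^{(s+1/2)}`. -/
noncomputable def Ctil (s : ℝ) (j : ℕ) (x : ℝ) : ℝ := gegen (s + 1 / 2) j x / hnorm s j

/-- The Gegenbauer coefficient `v_{j,s} = ∫_{-1}^1 v C̃_j^{(s+1/2)} (1-x²)^s dx`. -/
noncomputable def vcoef (s : ℝ) (v : ℝ → ℝ) (j : ℕ) : ℝ :=
  ∫ x in Set.Ioo (-1 : ℝ) 1, v x * Ctil s j x * (1 - x ^ 2) ^ s

lemma gegen_rec (l : ℝ) (n : ℕ) (x : ℝ) :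
    ((n : ℝ) + 2) * gegen l (n + 2) x =
      2 * x * ((n : ℝ) + 1 + l) * gegen l (n + 1) x - ((n : ℝ) + 2 * l) * gegen l n x := by
  have h : ((n : ℝ) + 2) ≠ 0 := by positivity
  rw [gegen]
  field_simp
  ring

/-- Two contiguous relations between parameters `l` and `l + 1`. -/
lemma gegen_contig (l : ℝ) (x : ℝ) (n : ℕ) :
    ((n : ℝ) + 2) * gegen l (n + 2) x =
        2 * l * (x * gegen (l + 1) (n + 1) x - gegen (l + 1) n x) ∧
      ((n : ℝ) + 1 + 2 * l) * gegen l (n + 1) x =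
        2 * l * (gegen (l + 1) (n + 1) x - x * gegen (l + 1) n x) := by
  induction n with
  | zero =>
    constructor
    · have := gegen_rec l 0 x
      simp only [gegen, Nat.cast_zero] at *
      rw [this]; ring
    · simp only [gegen, Nat.cast_zero]; ring
  | succ n ih =>
    obtain ⟨h2, h3⟩ := ih
    have hn : ((n : ℝ) + 2) ≠ 0 := by positivity
    have h3' : ((n : ℝ) + 2 + 2 * l) * gegen l (n + 2) x =
        2 * l * (gegen (l + 1) (n + 2) x - x * gegen (l + 1) (n + 1) x) := by
      have hg := gegen_rec (l + 1) n x
      apply mul_left_cancel₀ hn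
      linear_combination ((n : ℝ) + 2 + 2 * l) * h2 - 2 * l * hg
    have h2' : ((n : ℝ) + 3) * gegen l (n + 3) x =
        2 * l * (x * gegen (l + 1) (n + 2) x - gegen (l + 1) (n + 1) x) := by
      have hr := gegen_rec l (n + 1) x
      push_cast at hr
      have e : ((n : ℝ) + 1 + 2) = n + 3 := by ring
      rw [e] at hr
      linear_combination hr + x * h2 + x * h3' - h3
    refine ⟨?_, ?_⟩
    · push_cast
      linear_combination h2'
    · push_cast
      linear_combination h3'

lemma gegen_hasDeriv (l : ℝ) (x : ℝ) (n : ℕ) :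
    HasDerivAt (gegen l (n + 1)) (2 * l * gegen (l + 1) n x) x := by
  have key : ∀ n : ℕ, HasDerivAt (gegen l (n + 1)) (2 * l * gegen (l + 1) n x) x ∧
      HasDerivAt (gegen l (n + 2)) (2 * l * gegen (l + 1) (n + 1) x) x := by
    intro n
    have h1 : HasDerivAt (gegen l 1) (2 * l * gegen (l + 1) 0 x) x := by
      have := (hasDerivAt_id x).const_mul (2 * l)
      refine (this.congr_deriv ?_).congr_of_eventuallyEq ?_
      · simp [gegen]
      · exact Eventually.of_forall fun y => by simp [gegen]
    induction n with
    | zero =>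
      refine ⟨h1, ?_⟩
      have h0 : HasDerivAt (gegen l 0) 0 x := by
        refine (hasDerivAt_const x (1 : ℝ)).congr_of_eventuallyEq ?_
        exact Eventually.of_forall fun y => by simp [gegen]
      have := ((((hasDerivAt_id x).const_mul 2).mul_const (((0 : ℕ) : ℝ) + 2 + l - 1)).mul h1).sub
        (h0.const_mul (((0 : ℕ) : ℝ) + 2 + 2 * l - 2)) |>.div_const (((0 : ℕ) : ℝ) + 2)
      refine (this.congr_deriv ?_).congr_of_eventuallyEq ?_
      · simp [gegen]; ring
      · exact Eventually.of_forall fun y => by simp [gegen]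
    | succ n ih =>
      refine ⟨ih.2, ?_⟩
      have := ((((hasDerivAt_id x).const_mul 2).mul_const (((n + 1 : ℕ) : ℝ) + 2 + l - 1)).mul ih.2).sub
        (ih.1.const_mul (((n + 1 : ℕ) : ℝ) + 2 + 2 * l - 2)) |>.div_const (((n + 1 : ℕ) : ℝ) + 2)
      refine (this.congr_deriv ?_).congr_of_eventuallyEq ?_
      · have hg := gegen_rec (l + 1) n x
        obtain ⟨c2, -⟩ := gegen_contig l x n
        obtain ⟨-, c3⟩ := gegen_contig l x (n + 1)
        have hn : (((n + 1 : ℕ) : ℝ) + 2) ≠ 0 := by positivity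
        rw [div_eq_iff hn]
        push_cast at *
        simp only [id, mul_one] at *
        linear_combination c2 + c3 - 2 * l * hg
      · exact Eventually.of_forall fun y => by rw [gegen]; simp
  exact (key n).1

lemma gegen_continuous (l : ℝ) (n : ℕ) : Continuous (gegen l n) := by
  cases n with
  | zero =>
    have : gegen l 0 = fun _ => 1 := by funext y; simp [gegen]
    rw [this]; exact continuous_const
  | succ n => exact continuous_iff_continuousAt.2 fun x => (gegen_hasDeriv l x n).continuousAt

lemma gegen_neg (l : ℝ) (x : ℝ) (n : ℕ) :
    gegen l n (-x) = (-1) ^ n * gegen l n x ∧ gegen l (n + 1) (-x) = (-1) ^ (n + 1) * gegen l (n + 1) x := by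
  induction n with
  | zero => simp [gegen]
  | succ n ih =>
    refine ⟨ih.2, ?_⟩
    rw [gegen, gegen, ih.1, ih.2]
    ring

lemma gegen_neg_sq (l : ℝ) (x : ℝ) (n : ℕ) : gegen l n (-x) ^ 2 = gegen l n x ^ 2 := by
  rw [(gegen_neg l x n).1, mul_pow, ← pow_mul, mul_comm n 2, pow_mul]; simp

/-- Lowering relation, with derivative in existential form. -/
lemma gegen_lower (l : ℝ) (hl : l ≠ 0) (x : ℝ) (n : ℕ) :
    ∃ d, HasDerivAt (gegen (l + 1) n) d x ∧
      (1 - x ^ 2) * d - (2 * l + 1) * x * gegen (l + 1) n x =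
        -(((n : ℝ) + 1) * ((n : ℝ) + 1 + 2 * l) / (2 * l)) * gegen l (n + 1) x := by
  cases n with
  | zero =>
    refine ⟨0, ?_, ?_⟩
    · refine (hasDerivAt_const x (1 : ℝ)).congr_of_eventuallyEq ?_
      exact Eventually.of_forall fun y => by simp [gegen]
    · simp [gegen]; field_simp; ring
  | succ n =>
    refine ⟨_, gegen_hasDeriv (l + 1) x n, ?_⟩
    obtain ⟨a2, a3⟩ := gegen_contig l x n
    have key : (1 - x ^ 2) * (2 * (l + 1) * gegen (l + 1 + 1) n x) =
        ((n : ℝ) + 2 * l + 2) * gegen (l + 1) n x - ((n : ℝ) + 1) * x * gegen (l + 1) (n + 1) x := by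
      cases n with
      | zero => simp [gegen]; ring
      | succ n =>
        obtain ⟨b2, b3⟩ := gegen_contig (l + 1) x n
        push_cast
        linear_combination x * b2 - b3
    rw [key]
    push_cast
    field_simp
    linear_combination (2 * l + n + 2) * a2

lemma wint (s : ℝ) (hs : -1 < s) :
    IntervalIntegrable (fun x : ℝ => (1 - x ^ 2) ^ s) volume (-1) 1 := by
  have h1 : IntervalIntegrable (fun x : ℝ => (1 - x ^ 2) ^ s) volume 0 1 := by
    have ha : IntervalIntegrable (fun x : ℝ => (1 - x) ^ s) volume 0 1 := by
      have := (intervalIntegral.intervalIntegrable_rpow' (a := 0) (b := 1) hs).comp_sub_left 1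
      simpa using this.symm
    have hb : ContinuousOn (fun x : ℝ => (1 + x) ^ s) (uIcc 0 1) := by
      apply ContinuousOn.rpow_const (by fun_prop)
      intro x hx
      rw [uIcc_of_le zero_le_one] at hx
      left; linarith [hx.1]
    refine (ha.continuousOn_mul hb).congr_uIoo ?_
    intro x hx
    rw [uIoo_of_le zero_le_one] at hx
    simp only
    rw [← Real.mul_rpow (by linarith [hx.1]) (by linarith [hx.2])]
    congr 1; ring
  have h2 : IntervalIntegrable (fun x : ℝ => (1 - x ^ 2) ^ s) volume (-1) 0 := by
    have := h1.comp_sub_left 0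
    simpa using this.symm
  exact h2.trans h1

lemma wpint (s : ℝ) (hs : -1 < s) {a b : ℝ} (ha : a ∈ Icc (-1 : ℝ) 1) (hb : b ∈ Icc (-1 : ℝ) 1)
    {f : ℝ → ℝ} (hf : ContinuousOn f (uIcc a b)) :
    IntervalIntegrable (fun x : ℝ => f x * (1 - x ^ 2) ^ s) volume a b := by
  refine IntervalIntegrable.continuousOn_mul ((wint s hs).mono_set ?_) hf
  rw [uIcc_of_le (by norm_num : (-1 : ℝ) ≤ 1)]
  exact uIcc_subset_Icc ha hb

lemma wcont (s : ℝ) (hs : 0 ≤ s) : Continuous (fun x : ℝ => (1 - x ^ 2) ^ s) :=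
  Continuous.rpow_const (by fun_prop) fun _ => Or.inr hs

/-- The function `(1-x²)^{s+1} C_j^{(s+3/2)}`. -/
noncomputable def Wf (s : ℝ) (j : ℕ) (x : ℝ) : ℝ := gegen (s + 1 + 1 / 2) j x * (1 - x ^ 2) ^ (s + 1)

lemma Wf_cont (s : ℝ) (hs : -1 / 2 < s) (j : ℕ) : Continuous (Wf s j) :=
  (gegen_continuous _ j).mul (wcont (s + 1) (by linarith))

noncomputable def cj (s : ℝ) (j : ℕ) : ℝ := ((j : ℝ) + 1) * ((j : ℝ) + 2 * s + 2) / (2 * s + 1)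

lemma cj_pos (s : ℝ) (hs : -1 / 2 < s) (j : ℕ) : 0 < cj s j := by
  have : (0 : ℝ) ≤ j := j.cast_nonneg
  unfold cj
  apply div_pos (mul_pos _ _) <;> linarith

lemma Wf_deriv (s : ℝ) (hs : -1 / 2 < s) (j : ℕ) (x : ℝ) (hx : x ∈ Ioo (-1 : ℝ) 1) :
    HasDerivAt (Wf s j) (-(cj s j * (gegen (s + 1 / 2) (j + 1) x * (1 - x ^ 2) ^ s))) x := by
  obtain ⟨d, hd, he⟩ := gegen_lower (s + 1 / 2) (by linarith) x j
  have e1 : s + 1 / 2 + 1 = s + 1 + 1 / 2 := by ring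
  rw [e1] at hd he
  have hpos : 0 < 1 - x ^ 2 := by nlinarith [hx.1, hx.2]
  have hw : HasDerivAt (fun x : ℝ => (1 - x ^ 2) ^ (s + 1)) (-(2 * x) * (s + 1) * (1 - x ^ 2) ^ s) x := by
    have h0 : HasDerivAt (fun x : ℝ => 1 - x ^ 2) (-(2 * x)) x := by
      simpa using (hasDerivAt_pow 2 x).const_sub 1
    have := h0.rpow_const (p := s + 1) (Or.inl hpos.ne')
    simpa using this
  refine (hd.mul hw).congr_deriv ?_
  rw [Real.rpow_add_one hpos.ne']
  unfold cj
  have h2 : (2 * s + 1) ≠ 0 := by linarith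
  have e2 : 2 * (s + 1 / 2) = 2 * s + 1 := by ring
  rw [e2] at he
  have e3 : ((j : ℝ) + 1 + (2 * s + 1)) = (j : ℝ) + 2 * s + 2 := by ring
  rw [e3] at he
  linear_combination (1 - x ^ 2) ^ s * he

lemma ibp (s : ℝ) (hs : -1 / 2 < s) (j : ℕ) {a b : ℝ} (hab : a ≤ b) (ha : -1 ≤ a) (hb : b ≤ 1)
    {f f' : ℝ → ℝ} {S : Set ℝ} (hS : S.Countable) (hf : ContinuousOn f (Icc a b))
    (hd : ∀ x ∈ Ioo a b \ S, HasDerivAt f (f' x) x)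
    (hi : IntervalIntegrable (fun x => f' x * Wf s j x) volume a b) :
    cj s j * (∫ x in a..b, f x * gegen (s + 1 / 2) (j + 1) x * (1 - x ^ 2) ^ s) =
      (∫ x in a..b, f' x * Wf s j x) - (f b * Wf s j b - f a * Wf s j a) := by
  have i2 : IntervalIntegrable
      (fun x => f x * gegen (s + 1 / 2) (j + 1) x * (1 - x ^ 2) ^ s) volume a b := by
    apply wpint s (by linarith) ⟨ha, by linarith⟩ ⟨by linarith, hb⟩
    rw [uIcc_of_le hab]
    exact hf.mul (gegen_continuous _ _).continuousOn
  have := integral_eq_of_hasDerivAt_off_countable_of_le (fun x => f x * Wf s j x)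
    (fun x => f' x * Wf s j x -
      cj s j * (f x * gegen (s + 1 / 2) (j + 1) x * (1 - x ^ 2) ^ s)) hab hS
    (hf.mul (Wf_cont s hs j).continuousOn)
    (fun x hx => ((hd x hx).mul (Wf_deriv s hs j x
      ⟨by linarith [hx.1.1], by linarith [hx.1.2]⟩)).congr_deriv (by ring))
    (hi.sub (i2.const_mul _))
  rw [intervalIntegral.integral_sub hi (i2.const_mul _), intervalIntegral.integral_const_mul] at this
  linarith

lemma Wf_one (s : ℝ) (hs : -1 / 2 < s) (j : ℕ) : Wf s j 1 = 0 ∧ Wf s j (-1) = 0 := by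
  have : s + 1 ≠ 0 := by linarith
  simp [Wf, Real.zero_rpow this]

noncomputable def Inorm (s : ℝ) (j : ℕ) : ℝ :=
  ∫ x in (-1 : ℝ)..1, gegen (s + 1 / 2) j x ^ 2 * (1 - x ^ 2) ^ s

lemma Inorm_succ (s : ℝ) (hs : -1 / 2 < s) (j : ℕ) :
    cj s j * Inorm s (j + 1) = (2 * s + 1) * Inorm (s + 1) j := by
  have e1 : s + 1 / 2 + 1 = s + 1 + 1 / 2 := by ring
  have e : ∀ x, (2 * (s + 1 / 2) * gegen (s + 1 / 2 + 1) j x) * Wf s j x =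
      (2 * s + 1) * (gegen (s + 1 + 1 / 2) j x ^ 2 * (1 - x ^ 2) ^ (s + 1)) := by
    intro x; rw [e1, Wf]; ring
  have := ibp s hs j (a := -1) (b := 1) (by norm_num) le_rfl le_rfl
    (f := gegen (s + 1 / 2) (j + 1)) (f' := fun x => 2 * (s + 1 / 2) * gegen (s + 1 / 2 + 1) j x)
    (S := ∅) countable_empty (gegen_continuous _ _).continuousOn
    (fun x _ => gegen_hasDeriv _ x j)
    (((continuous_const.mul (gegen_continuous _ _)).mul (Wf_cont s hs j)).intervalIntegrable _ _)
  rw [(Wf_one s hs j).1, (Wf_one s hs j).2] at this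
  simp only [e, intervalIntegral.integral_const_mul] at this
  unfold Inorm
  simp only [pow_two (gegen _ _ _)] at *
  linarith

lemma Inorm_zero (s : ℝ) (hs : -1 / 2 < s) :
    (2 * s + 3) * Inorm (s + 1) 0 = (2 * s + 2) * Inorm s 0 := by
  have i1 := wint s (by linarith)
  have i2 := wint (s + 1) (by linarith)
  have := integral_eq_of_hasDerivAt_off_countable_of_le (fun x : ℝ => x * (1 - x ^ 2) ^ (s + 1))
    (fun x => (2 * s + 3) * (1 - x ^ 2) ^ (s + 1) - (2 * s + 2) * (1 - x ^ 2) ^ s)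
    (by norm_num : (-1 : ℝ) ≤ 1) (countable_empty)
    ((continuous_id.mul (wcont (s + 1) (by linarith))).continuousOn) ?_
    ((i2.const_mul _).sub (i1.const_mul _))
  · rw [intervalIntegral.integral_sub (i2.const_mul _) (i1.const_mul _),
      intervalIntegral.integral_const_mul, intervalIntegral.integral_const_mul] at this
    have h1 : s + 1 ≠ 0 := by linarith
    simp [Real.zero_rpow h1] at this
    simp only [Inorm, gegen, one_pow, one_mul]
    linarith
  · intro x hx
    have hpos : 0 < 1 - x ^ 2 := by nlinarith [hx.1.1, hx.1.2]
    have h0 : HasDerivAt (fun x : ℝ => 1 - x ^ 2) (-(2 * x)) x := by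
      simpa using (hasDerivAt_pow 2 x).const_sub 1
    have := (hasDerivAt_id x).mul (h0.rpow_const (p := s + 1) (Or.inl hpos.ne'))
    refine this.congr_deriv ?_
    simp only [id, add_sub_cancel_right]
    rw [Real.rpow_add_one hpos.ne']
    ring

lemma hnorm_sq_pos (s : ℝ) (hs : -1 / 2 < s) (j : ℕ) :
    0 < 2 ^ (-(2 * s)) * Real.pi / (Real.Gamma (s + 1 / 2)) ^ 2 *
    (Real.Gamma ((j : ℝ) + 2 * s + 1) / (Real.Gamma ((j : ℝ) + 1) * ((j : ℝ) + s + 1 / 2))) := by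
  have hj : (0 : ℝ) ≤ j := j.cast_nonneg
  have h1 := Real.Gamma_pos_of_pos (show 0 < s + 1 / 2 by linarith)
  have h2 := Real.Gamma_pos_of_pos (show 0 < (j : ℝ) + 2 * s + 1 by linarith)
  have h3 := Real.Gamma_pos_of_pos (show 0 < (j : ℝ) + 1 by linarith)
  have h4 : 0 < (j : ℝ) + s + 1 / 2 := by linarith
  have := Real.pi_pos
  positivity

lemma hnorm_pos (s : ℝ) (hs : -1 / 2 < s) (j : ℕ) : 0 < hnorm s j :=
  Real.sqrt_pos.2 (hnorm_sq_pos s hs j)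

lemma hnorm_sq (s : ℝ) (hs : -1 / 2 < s) (j : ℕ) : hnorm s j ^ 2 =
    2 ^ (-(2 * s)) * Real.pi / (Real.Gamma (s + 1 / 2)) ^ 2 *
    (Real.Gamma ((j : ℝ) + 2 * s + 1) / (Real.Gamma ((j : ℝ) + 1) * ((j : ℝ) + s + 1 / 2))) :=
  Real.sq_sqrt (hnorm_sq_pos s hs j).le

lemma hnorm_succ (s : ℝ) (hs : -1 / 2 < s) (j : ℕ) :
    (2 * s + 1) * hnorm (s + 1) j ^ 2 = cj s j * hnorm s (j + 1) ^ 2 := by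
  have hj : (0 : ℝ) ≤ j := j.cast_nonneg
  rw [hnorm_sq s hs, hnorm_sq (s + 1) (by linarith)]
  have e1 : s + 1 + 1 / 2 = (s + 1 / 2) + 1 := by ring
  have e2 : (j : ℝ) + 2 * (s + 1) + 1 = ((j : ℝ) + 2 * s + 2) + 1 := by ring
  have e3 : ((j + 1 : ℕ) : ℝ) + 2 * s + 1 = (j : ℝ) + 2 * s + 2 := by push_cast; ring
  have e4 : (2 : ℝ) ^ (-(2 * (s + 1))) = 2 ^ (-(2 * s)) / 4 := by
    rw [show -(2 * (s + 1)) = -(2 * s) - 2 by ring, Real.rpow_sub two_pos]; norm_num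
  rw [e1, Real.Gamma_add_one (by linarith), e2, Real.Gamma_add_one (by linarith), e3, e4,
    Nat.cast_succ, Real.Gamma_add_one (s := (j : ℝ) + 1) (by linarith)]
  unfold cj
  have h1 := (Real.Gamma_pos_of_pos (show 0 < s + 1 / 2 by linarith)).ne'
  have h3 := (Real.Gamma_pos_of_pos (show 0 < (j : ℝ) + 1 by linarith)).ne'
  have h4 : (2 * s + 1) ≠ 0 := by linarith
  have h5 : s + 1 / 2 ≠ 0 := by linarith
  have h6 : (j : ℝ) + 1 + s + 1 / 2 ≠ 0 := by linarith
  have h7 : (j : ℝ) + (s + 1) + 1 / 2 ≠ 0 := by linarith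
  have h8 : (j : ℝ) + 1 ≠ 0 := by linarith
  have e7 : (j : ℝ) + (s + 1) + 1 / 2 = (j : ℝ) + 1 + s + 1 / 2 := by ring
  have e8 : s + 1 / 2 = (2 * s + 1) / 2 := by ring
  rw [e7]
  rw [e8] at *
  generalize (j : ℝ) + 1 + s + 1 / 2 = A at *
  generalize Real.Gamma ((2 * s + 1) / 2) = B at *
  generalize Real.Gamma ((j : ℝ) + 1) = D at *
  field_simp
  ring

lemma hnorm_zero (s : ℝ) (hs : -1 / 2 < s) :
    (2 * s + 3) * hnorm (s + 1) 0 ^ 2 = (2 * s + 2) * hnorm s 0 ^ 2 := by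
  rw [hnorm_sq s hs, hnorm_sq (s + 1) (by linarith)]
  have e1 : s + 1 + 1 / 2 = (s + 1 / 2) + 1 := by ring
  have e2 : ((0 : ℕ) : ℝ) + 2 * (s + 1) + 1 = (2 * s + 1 + 1) + 1 := by push_cast; ring
  have e3 : ((0 : ℕ) : ℝ) + 2 * s + 1 = 2 * s + 1 := by push_cast; ring
  have e4 : (2 : ℝ) ^ (-(2 * (s + 1))) = 2 ^ (-(2 * s)) / 4 := by
    rw [show -(2 * (s + 1)) = -(2 * s) - 2 by ring, Real.rpow_sub two_pos]; norm_num
  rw [e1, Real.Gamma_add_one (by linarith), e2, Real.Gamma_add_one (by linarith),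
    Real.Gamma_add_one (s := 2 * s + 1) (by linarith), e3, e4]
  have h1 := (Real.Gamma_pos_of_pos (show 0 < s + 1 / 2 by linarith)).ne'
  have h4 : (2 * s + 1) ≠ 0 := by linarith
  have h6 : (2 * s + 3) ≠ 0 := by linarith
  have e7 : ((0 : ℕ) : ℝ) + (s + 1) + 1 / 2 = (2 * s + 3) / 2 := by push_cast; ring
  have e9 : ((0 : ℕ) : ℝ) + s + 1 / 2 = (2 * s + 1) / 2 := by push_cast; ring
  have e8 : s + 1 / 2 = (2 * s + 1) / 2 := by ring
  rw [e7, e9]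
  rw [e8] at *
  generalize Real.Gamma ((2 * s + 1) / 2) = B at *
  simp only [Nat.cast_zero, zero_add, Real.Gamma_one]
  field_simp
  ring

/-- `‖C_j‖² = R(s) h_j²`. -/
lemma Inorm_eq (j : ℕ) : ∀ (s : ℝ), -1 / 2 < s →
    Inorm s j / hnorm s j ^ 2 = Inorm s 0 / hnorm s 0 ^ 2 := by
  induction j with
  | zero => intro s hs; rfl
  | succ j ih =>
    intro s hs
    have hs1 : -1 / 2 < s + 1 := by linarith
    have p1 := (hnorm_pos s hs (j + 1)).ne'
    have p2 := (hnorm_pos (s + 1) hs1 j).ne'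
    have p3 := (hnorm_pos (s + 1) hs1 0).ne'
    have p4 := (hnorm_pos s hs 0).ne'
    have c := (cj_pos s hs j).ne'
    calc Inorm s (j + 1) / hnorm s (j + 1) ^ 2 = Inorm (s + 1) j / hnorm (s + 1) j ^ 2 := by
          have h1 := Inorm_succ s hs j
          have h2 := hnorm_succ s hs j
          rw [div_eq_div_iff (by positivity) (by positivity)]
          apply mul_left_cancel₀ c
          apply mul_left_cancel₀ (show (2 * s + 1) ≠ 0 by linarith)
          linear_combination (2 * s + 1) * hnorm (s + 1) j ^ 2 * h1 + (2 * s + 1) * Inorm (s + 1) j * h2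
      _ = Inorm (s + 1) 0 / hnorm (s + 1) 0 ^ 2 := ih (s + 1) hs1
      _ = Inorm s 0 / hnorm s 0 ^ 2 := by
          have h1 := Inorm_zero s hs
          have h2 := hnorm_zero s hs
          rw [div_eq_div_iff (by positivity) (by positivity)]
          apply mul_left_cancel₀ (show (2 * s + 3) ≠ 0 by linarith)
          linear_combination hnorm s 0 ^ 2 * h1 - Inorm s 0 * h2

lemma Inorm_nonneg (s : ℝ) (j : ℕ) : 0 ≤ Inorm s j := by
  apply intervalIntegral.integral_nonneg (by norm_num)
  intro x hx
  have : 0 ≤ 1 - x ^ 2 := by nlinarith [hx.1, hx.2]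
  positivity

noncomputable def Rc (s : ℝ) : ℝ := Inorm s 0 / hnorm s 0 ^ 2

lemma Rc_nonneg (s : ℝ) : 0 ≤ Rc s := div_nonneg (Inorm_nonneg s 0) (sq_nonneg _)

lemma Inorm_eq' (s : ℝ) (hs : -1 / 2 < s) (j : ℕ) : Inorm s j = Rc s * hnorm s j ^ 2 := by
  have := Inorm_eq j s hs
  rw [div_eq_iff (by have := hnorm_pos s hs j; positivity)] at this
  exact this

lemma pointwise (s : ℝ) (hs : -1 / 2 < s) (j : ℕ) (x₀ : ℝ) (h0 : 0 ≤ x₀) (h1 : x₀ < 1) :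
    gegen (s + 1 / 2) (j + 1) x₀ ^ 2 * (∫ x in x₀..1, (1 - x ^ 2) ^ s) ≤ 2 * Inorm s (j + 1) := by
  set l := s + 1 / 2 with hl
  have hlpos : 0 < l := by rw [hl]; linarith
  have e1 : s + 1 + 1 / 2 = l + 1 := by rw [hl]; ring
  set N : ℝ := ((j : ℝ) + 1) * ((j : ℝ) + 1 + 2 * l) with hN
  have hNpos : 0 < N := by positivity
  have hNc : N = 2 * l * cj s j := by
    have : (2 * s + 1) ≠ 0 := by linarith
    rw [hN, hl, cj]; field_simp; ring
  set E : ℝ → ℝ := fun x => (1 - x ^ 2) * (2 * l * gegen (l + 1) j x) ^ 2 + N * gegen l (j + 1) x ^ 2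
    with hE
  have hEc : Continuous E := by
    have := gegen_continuous (l + 1) j
    have := gegen_continuous l (j + 1)
    rw [hE]; fun_prop
  have hEd : ∀ x, HasDerivAt E (4 * l * x * (2 * l * gegen (l + 1) j x) ^ 2) x := by
    intro x
    obtain ⟨d, hd, he⟩ := gegen_lower l hlpos.ne' x j
    have hq : HasDerivAt (fun x : ℝ => 1 - x ^ 2) (-(2 * x)) x := by
      simpa using (hasDerivAt_pow 2 x).const_sub 1
    have := (hq.mul ((hd.const_mul (2 * l)).pow 2)).add (((gegen_hasDeriv l x j).pow 2).const_mul N)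
    refine this.congr_deriv ?_
    have he' : 2 * l * ((1 - x ^ 2) * d) = 2 * l * ((2 * l + 1) * x * gegen (l + 1) j x)
        - N * gegen l (j + 1) x := by
      have : (1 - x ^ 2) * d = (2 * l + 1) * x * gegen (l + 1) j x - (N / (2 * l)) * gegen l (j + 1) x := by
        linarith
      rw [this]; field_simp
    simp only [Pi.pow_apply]
    push_cast
    linear_combination 2 * (2 * l * gegen (l + 1) j x) * he'
  have hmono : MonotoneOn E (Icc 0 1) := by
    apply monotoneOn_of_deriv_nonneg (convex_Icc 0 1) hEc.continuousOn
    · exact fun x _ => (hEd x).differentiableAt.differentiableWithinAt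
    · intro x hx
      rw [interior_Icc] at hx
      rw [(hEd x).deriv]
      have := hx.1
      positivity
  have hEw : ∀ a ∈ Icc (-1 : ℝ) 1, IntervalIntegrable (fun x => E x * (1 - x ^ 2) ^ s) volume a 1 :=
    fun a ha => wpint s (by linarith) ha (by simp) hEc.continuousOn
  have hx0 : x₀ ∈ Icc (-1 : ℝ) 1 := ⟨by linarith, h1.le⟩
  have hww : IntervalIntegrable (fun x : ℝ => (1 - x ^ 2) ^ s) volume x₀ 1 := by
    simpa using wpint s (by linarith) hx0 (by simp) (f := fun _ => 1) continuousOn_const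
  have s1 : E x₀ * (∫ x in x₀..1, (1 - x ^ 2) ^ s) ≤ ∫ x in x₀..1, E x * (1 - x ^ 2) ^ s := by
    rw [← intervalIntegral.integral_const_mul]
    apply intervalIntegral.integral_mono_on h1.le (hww.const_mul _) (hEw _ hx0)
    intro x hx
    have hp : 0 ≤ 1 - x ^ 2 := by nlinarith [hx.1, hx.2]
    apply mul_le_mul_of_nonneg_right _ (Real.rpow_nonneg hp s)
    exact hmono ⟨h0, h1.le⟩ ⟨h0.trans hx.1, hx.2⟩ hx.1
  have s2 : (∫ x in x₀..1, E x * (1 - x ^ 2) ^ s) ≤ ∫ x in (-1 : ℝ)..1, E x * (1 - x ^ 2) ^ s := by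
    apply intervalIntegral.integral_mono_interval hx0.1 h1.le le_rfl _ (hEw _ (by simp))
    refine (ae_restrict_iff' measurableSet_Ioc).2 (Eventually.of_forall fun x hx => ?_)
    have hp : 0 ≤ 1 - x ^ 2 := by nlinarith [hx.1, hx.2]
    simp only [Pi.zero_apply, hE]
    have := Real.rpow_nonneg hp s
    positivity
  have s3 : (∫ x in (-1 : ℝ)..1, E x * (1 - x ^ 2) ^ s) = 2 * N * Inorm s (j + 1) := by
    have hc : (∫ x in (-1 : ℝ)..1, E x * (1 - x ^ 2) ^ s) =
        ∫ x in (-1 : ℝ)..1, ((2 * l) ^ 2 * (gegen (l + 1) j x ^ 2 * (1 - x ^ 2) ^ (s + 1)) +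
          N * (gegen l (j + 1) x ^ 2 * (1 - x ^ 2) ^ s)) := by
      apply intervalIntegral.integral_congr_Ioo_of_le (by norm_num)
      intro x hx
      have hp : 0 < 1 - x ^ 2 := by nlinarith [hx.1, hx.2]
      simp only [hE]
      rw [Real.rpow_add_one hp.ne']
      ring
    have j1 : IntervalIntegrable (fun x => gegen (l + 1) j x ^ 2 * (1 - x ^ 2) ^ (s + 1)) volume (-1) 1 :=
      wpint (s + 1) (by linarith) (by simp) (by simp) ((gegen_continuous _ _).pow 2).continuousOn
    have j2 : IntervalIntegrable (fun x => gegen l (j + 1) x ^ 2 * (1 - x ^ 2) ^ s) volume (-1) 1 :=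
      wpint s (by linarith) (by simp) (by simp) ((gegen_continuous _ _).pow 2).continuousOn
    rw [hc, intervalIntegral.integral_add (j1.const_mul _) (j2.const_mul _),
      intervalIntegral.integral_const_mul, intervalIntegral.integral_const_mul]
    have h := Inorm_succ s hs j
    unfold Inorm at h ⊢
    rw [e1, ← hl] at h
    rw [← hl, hNc]
    have : 2 * s + 1 = 2 * l := by rw [hl]; ring
    rw [this] at h
    linear_combination -(2 * l) * h
  have s4 : N * gegen l (j + 1) x₀ ^ 2 ≤ E x₀ := by
    have hp : 0 ≤ 1 - x₀ ^ 2 := by nlinarith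
    simp only [hE]
    have : 0 ≤ (1 - x₀ ^ 2) * (2 * l * gegen (l + 1) j x₀) ^ 2 := by positivity
    linarith
  have m0 : 0 ≤ ∫ x in x₀..1, (1 - x ^ 2) ^ s := by
    apply intervalIntegral.integral_nonneg h1.le
    intro x hx
    exact Real.rpow_nonneg (by nlinarith [hx.1, hx.2]) s
  have := mul_le_mul_of_nonneg_right s4 m0
  have f : N * (gegen l (j + 1) x₀ ^ 2 * ∫ x in x₀..1, (1 - x ^ 2) ^ s) ≤ N * (2 * Inorm s (j + 1)) := by
    linarith
  exact le_of_mul_le_mul_left f hNpos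

lemma Wf_bound (s : ℝ) (hs : -1 / 2 < s) (x : ℝ) (hx : x ∈ Icc (-1 : ℝ) 1) :
    ∃ B : ℝ, 0 ≤ B ∧ ∀ j : ℕ, |Wf s (j + 1) x| ≤ B * hnorm (s + 1) (j + 1) := by
  have hs1 : -1 / 2 < s + 1 := by linarith
  rcases eq_or_lt_of_le hx.1 with h | h
  · refine ⟨0, le_rfl, fun j => ?_⟩
    rw [← h, (Wf_one s hs _).2]; simp
  rcases eq_or_lt_of_le hx.2 with h' | h'
  · refine ⟨0, le_rfl, fun j => ?_⟩
    rw [h', (Wf_one s hs _).1]; simp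
  have ha1 : |x| < 1 := abs_lt.2 ⟨h, h'⟩
  set m := ∫ y in |x|..1, (1 - y ^ 2) ^ (s + 1) with hm
  have mpos : 0 < m := by
    apply intervalIntegral.intervalIntegral_pos_of_pos_on
      ((wcont (s + 1) (by linarith)).intervalIntegrable _ _) _ ha1
    intro y hy
    have := abs_nonneg x
    exact Real.rpow_pos_of_pos (by nlinarith [hy.1, hy.2]) _
  set q := (1 - x ^ 2) ^ (s + 1) with hq
  have hq0 : 0 ≤ q := Real.rpow_nonneg (by nlinarith) _
  refine ⟨Real.sqrt (2 * Rc (s + 1) / m) * q, by positivity, fun j => ?_⟩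
  have hh := hnorm_pos (s + 1) hs1 (j + 1)
  have hp := pointwise (s + 1) hs1 j |x| (abs_nonneg x) ha1
  rw [← hm, Inorm_eq' (s + 1) hs1] at hp
  have hsq : gegen (s + 1 + 1 / 2) (j + 1) |x| ^ 2 = gegen (s + 1 + 1 / 2) (j + 1) x ^ 2 := by
    rcases abs_choice x with h | h <;> rw [h]
    exact gegen_neg_sq _ _ _
  rw [hsq] at hp
  have hb : |gegen (s + 1 + 1 / 2) (j + 1) x| ≤ Real.sqrt (2 * Rc (s + 1) / m) * hnorm (s + 1) (j + 1) := by
    apply abs_le_of_sq_le_sq _ (by positivity)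
    rw [mul_pow, Real.sq_sqrt (by have := Rc_nonneg (s + 1); positivity), div_mul_eq_mul_div,
      le_div_iff₀ mpos]
    linarith
  rw [Wf, abs_mul, abs_of_nonneg hq0]
  calc _ ≤ (Real.sqrt (2 * Rc (s + 1) / m) * hnorm (s + 1) (j + 1)) * q :=
        mul_le_mul_of_nonneg_right hb hq0
    _ = _ := by ring

lemma hnorm_ratio (s : ℝ) (hs : -1 / 2 < s) (j : ℕ) :
    hnorm (s + 1) j ≤ cj s j * hnorm s (j + 1) / ((j : ℝ) + 1) := by
  have hj : (0 : ℝ) ≤ j := j.cast_nonneg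
  have hc := cj_pos s hs j
  have hh := hnorm_pos s hs (j + 1)
  have h2 := hnorm_succ s hs j
  have h3 : 0 < 2 * s + 1 := by linarith
  have h4 : (2 * s + 1) * cj s j = ((j : ℝ) + 1) * ((j : ℝ) + 2 * s + 2) := by
    unfold cj; field_simp
  refine le_of_abs_le (abs_le_of_sq_le_sq ?_ (by positivity))
  rw [div_pow, le_div_iff₀ (by positivity)]
  apply le_of_mul_le_mul_left _ h3
  have h5 : ((j : ℝ) + 1) ^ 2 ≤ (2 * s + 1) * cj s j := by rw [h4]; nlinarith
  calc (2 * s + 1) * (hnorm (s + 1) j ^ 2 * ((j : ℝ) + 1) ^ 2)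
      = (cj s j * hnorm s (j + 1) ^ 2) * ((j : ℝ) + 1) ^ 2 := by rw [← h2]; ring
    _ ≤ (cj s j * hnorm s (j + 1) ^ 2) * ((2 * s + 1) * cj s j) :=
        mul_le_mul_of_nonneg_left h5 (by positivity)
    _ = _ := by ring

lemma Wf_int_bound (s : ℝ) (hs : -1 / 2 < s) {a b : ℝ} (hab : a ≤ b) (ha : -1 ≤ a) (hb : b ≤ 1)
    {f : ℝ → ℝ} (M : ℝ) (hM : ∀ x ∈ Icc a b, |f x| ≤ M) :
    ∃ B : ℝ, 0 ≤ B ∧ ∀ j : ℕ, |∫ x in a..b, f x * Wf s j x| ≤ B * hnorm (s + 1) j := by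
  have hs1 : -1 / 2 < s + 1 := by linarith
  have hM0 : 0 ≤ M := (abs_nonneg _).trans (hM a ⟨le_rfl, hab⟩)
  refine ⟨M / 2 * (Inorm (s + 1) 0 + Rc (s + 1)), ?_, fun j => ?_⟩
  · have := Rc_nonneg (s + 1)
    have := Inorm_nonneg (s + 1) 0
    positivity
  set h := hnorm (s + 1) j with hh
  have hp : 0 < h := hnorm_pos (s + 1) hs1 j
  set g : ℝ → ℝ := fun x => (M / 2 * h) * (gegen (s + 1 + 1 / 2) 0 x ^ 2 * (1 - x ^ 2) ^ (s + 1)) +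
    (M / (2 * h)) * (gegen (s + 1 + 1 / 2) j x ^ 2 * (1 - x ^ 2) ^ (s + 1)) with hg
  have j1 : ∀ i : ℕ, Continuous (fun x => gegen (s + 1 + 1 / 2) i x ^ 2 * (1 - x ^ 2) ^ (s + 1)) :=
    fun i => ((gegen_continuous _ _).pow 2).mul (wcont (s + 1) (by linarith))
  have gc : Continuous g := (continuous_const.mul (j1 0)).add (continuous_const.mul (j1 j))
  have b1 : |∫ x in a..b, f x * Wf s j x| ≤ ∫ x in a..b, g x := by
    rw [← Real.norm_eq_abs]
    apply intervalIntegral.norm_integral_le_of_norm_le hab _ (gc.intervalIntegrable _ _)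
    refine Eventually.of_forall fun x hx => ?_
    have hw : 0 ≤ (1 - x ^ 2) ^ (s + 1) :=
      Real.rpow_nonneg (by nlinarith [hx.1, hx.2]) _
    rw [Real.norm_eq_abs, Wf, abs_mul, abs_mul, abs_of_nonneg hw]
    have hG : |gegen (s + 1 + 1 / 2) j x| ≤ h / 2 + gegen (s + 1 + 1 / 2) j x ^ 2 / (2 * h) := by
      rw [← sq_abs (gegen (s + 1 + 1 / 2) j x)]
      generalize |gegen (s + 1 + 1 / 2) j x| = t
      have : h / 2 + t ^ 2 / (2 * h) - t = (h - t) ^ 2 / (2 * h) := by field_simp; ring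
      have : 0 ≤ (h - t) ^ 2 / (2 * h) := by positivity
      linarith
    calc |f x| * (|gegen (s + 1 + 1 / 2) j x| * (1 - x ^ 2) ^ (s + 1))
        ≤ M * ((h / 2 + gegen (s + 1 + 1 / 2) j x ^ 2 / (2 * h)) * (1 - x ^ 2) ^ (s + 1)) := by
          apply mul_le_mul (hM x ⟨hx.1.le, hx.2⟩) (mul_le_mul_of_nonneg_right hG hw)
            (by positivity) hM0
      _ = g x := by simp only [hg, gegen]; field_simp
  have b2 : (∫ x in a..b, g x) ≤ ∫ x in (-1 : ℝ)..1, g x := by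
    apply intervalIntegral.integral_mono_interval ha hab hb _ (gc.intervalIntegrable _ _)
    refine (ae_restrict_iff' measurableSet_Ioc).2 (Eventually.of_forall fun x hx => ?_)
    have hw : 0 ≤ (1 - x ^ 2) ^ (s + 1) :=
      Real.rpow_nonneg (by nlinarith [hx.1, hx.2]) _
    simp only [Pi.zero_apply, hg]
    positivity
  have b3 : (∫ x in (-1 : ℝ)..1, g x) = M / 2 * h * Inorm (s + 1) 0 + M / (2 * h) * Inorm (s + 1) j := by
    simp only [hg]
    rw [intervalIntegral.integral_add (((j1 0).intervalIntegrable _ _).const_mul _)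
      (((j1 j).intervalIntegrable _ _).const_mul _),
      intervalIntegral.integral_const_mul, intervalIntegral.integral_const_mul]
    rfl
  rw [Inorm_eq' (s + 1) hs1 j, ← hh] at b3
  have : M / 2 * h * Inorm (s + 1) 0 + M / (2 * h) * (Rc (s + 1) * h ^ 2) =
      M / 2 * (Inorm (s + 1) 0 + Rc (s + 1)) * h := by field_simp
  linarith

lemma piece (s : ℝ) (hs : -1 / 2 < s) {a b : ℝ} (hab : a < b) (ha : -1 ≤ a) (hb : b ≤ 1)
    {f : ℝ → ℝ} (hf : ContDiffOn ℝ 1 f (Icc a b)) :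
    ∃ B : ℝ, 0 ≤ B ∧ ∀ j : ℕ,
      |∫ x in a..b, f x * gegen (s + 1 / 2) (j + 2) x * (1 - x ^ 2) ^ s| ≤
        B * hnorm s (j + 2) / ((j : ℝ) + 2) := by
  have hc' : ContinuousOn (derivWithin f (Icc a b)) (Icc a b) :=
    hf.continuousOn_derivWithin (uniqueDiffOn_Icc hab) le_rfl
  obtain ⟨M, hM⟩ := isCompact_Icc.exists_bound_of_continuousOn hc'
  obtain ⟨B₁, hB₁, h₁⟩ := Wf_int_bound s hs hab.le ha hb M hM
  obtain ⟨B₂, hB₂, h₂⟩ := Wf_bound s hs a ⟨ha, by linarith⟩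
  obtain ⟨B₃, hB₃, h₃⟩ := Wf_bound s hs b ⟨by linarith, hb⟩
  refine ⟨B₁ + |f b| * B₃ + |f a| * B₂, by positivity, fun j => ?_⟩
  have hi : IntervalIntegrable (fun x => derivWithin f (Icc a b) x * Wf s (j + 1) x) volume a b := by
    apply ContinuousOn.intervalIntegrable
    rw [uIcc_of_le hab.le]
    exact hc'.mul (Wf_cont s hs _).continuousOn
  have := ibp s hs (j + 1) hab.le ha hb (S := ∅) countable_empty hf.continuousOn
    (fun x hx => ((hf.differentiableOn one_ne_zero x
      (Ioo_subset_Icc_self hx.1)).hasDerivWithinAt.hasDerivAt (Icc_mem_nhds hx.1.1 hx.1.2))) hi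
  have hc := cj_pos s hs (j + 1)
  have hr := hnorm_ratio s hs (j + 1)
  push_cast at hr
  rw [show (j : ℝ) + 1 + 1 = (j : ℝ) + 2 by ring] at hr
  apply le_of_mul_le_mul_left _ hc
  rw [← abs_of_pos hc, ← abs_mul, this, abs_of_pos hc]
  set K := B₁ + |f b| * B₃ + |f a| * B₂ with hK
  have hK0 : 0 ≤ K := by positivity
  calc _ ≤ |∫ x in a..b, derivWithin f (Icc a b) x * Wf s (j + 1) x| +
        (|f b| * |Wf s (j + 1) b| + |f a| * |Wf s (j + 1) a|) := by
        rw [← abs_mul, ← abs_mul]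
        exact (abs_sub _ _).trans (add_le_add le_rfl (abs_sub _ _))
    _ ≤ B₁ * hnorm (s + 1) (j + 1) + (|f b| * (B₃ * hnorm (s + 1) (j + 1)) +
          |f a| * (B₂ * hnorm (s + 1) (j + 1))) :=
        add_le_add (h₁ _) (add_le_add (mul_le_mul_of_nonneg_left (h₃ _) (abs_nonneg _))
          (mul_le_mul_of_nonneg_left (h₂ _) (abs_nonneg _)))
    _ = K * hnorm (s + 1) (j + 1) := by rw [hK]; ring
    _ ≤ K * (cj s (j + 1) * hnorm s (j + 1 + 1) / ((j : ℝ) + 2)) :=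
        mul_le_mul_of_nonneg_left hr hK0
    _ = _ := by ring

lemma vcoef_eq (s : ℝ) (v : ℝ → ℝ) (j : ℕ) : vcoef s v j =
    (∫ x in (-1 : ℝ)..1, v x * gegen (s + 1 / 2) j x * (1 - x ^ 2) ^ s) / hnorm s j := by
  rw [vcoef, ← integral_Ioc_eq_integral_Ioo, ← intervalIntegral.integral_of_le (by norm_num),
    ← intervalIntegral.integral_div]
  congr 1
  funext x
  rw [Ctil]; ring

lemma shift_bound (u : ℕ → ℝ) (p : ℕ) (C : ℝ) (hC : 0 ≤ C)
    (h : ∀ j : ℕ, |u (j + 2)| ≤ C / ((j : ℝ) + 2) ^ p) :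
    ∃ C : ℝ, 0 ≤ C ∧ ∀ j : ℕ, |u (j + 1)| ≤ C / ((j : ℝ) + 1) ^ p := by
  refine ⟨C + |u 1|, by positivity, fun j => ?_⟩
  cases j with
  | zero => simpa using hC
  | succ j =>
    push_cast
    rw [show (j : ℝ) + 1 + 1 = (j : ℝ) + 2 by ring]
    refine (h j).trans ?_
    gcongr
    linarith [abs_nonneg (u 1)]

lemma exists_piece (a : ℕ → ℝ) (n : ℕ) (x : ℝ) (h0 : a 0 < x) (h1 : x < a n)
    (hne : ∀ i, x ≠ a i) : ∃ i < n, x ∈ Ioo (a i) (a (i + 1)) := by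
  induction n with
  | zero => exact absurd h0 (not_lt.2 h1.le)
  | succ n ih =>
    rcases lt_or_gt_of_ne (hne n) with h | h
    · obtain ⟨i, hi, hx⟩ := ih h
      exact ⟨i, by omega, hx⟩
    · exact ⟨n, by omega, h, h1⟩

theorem main_nat (n : ℕ) (a : ℕ → ℝ) (h0 : a 0 = -1) (hn : a n = 1)
    (hm : ∀ i < n, a i < a (i + 1)) (hr : ∀ i, a i ∈ Icc (-1 : ℝ) 1) (k : ℕ) :
    ∀ (s : ℝ), -1 / 2 < s → ∀ (v : ℝ → ℝ) (V : ℕ → ℝ → ℝ),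
    (∀ i < n, ContDiffOn ℝ ((k + 1 : ℕ)) (V i) (Icc (a i) (a (i + 1)))) →
    (∀ i < n, ∀ x ∈ Ioo (a i) (a (i + 1)), v x = V i x) →
    (1 ≤ k → ContDiffOn ℝ ((k - 1 : ℕ)) v (Icc (-1 : ℝ) 1)) →
    ∃ C : ℝ, 0 ≤ C ∧ ∀ j : ℕ, |vcoef s v (j + 1)| ≤ C / ((j : ℝ) + 1) ^ (k + 1) := by
  induction k with
  | zero =>
    intro s hs v V hV hvV _
    have hp : ∀ i : ℕ, ∃ B : ℝ, 0 ≤ B ∧ (i < n → ∀ j : ℕ,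
      |∫ x in (a i)..(a (i + 1)), V i x * gegen (s + 1 / 2) (j + 2) x * (1 - x ^ 2) ^ s| ≤
        B * hnorm s (j + 2) / ((j : ℝ) + 2)) := by
      intro i
      by_cases hi : i < n
      · obtain ⟨B, hB, h⟩ := piece s hs (hm i hi) (hr i).1 (hr (i + 1)).2
          (by simpa using hV i hi)
        exact ⟨B, hB, fun _ => h⟩
      · exact ⟨0, le_rfl, fun h => absurd h hi⟩
    choose B hB hBb using hp
    apply shift_bound (vcoef s v) (0 + 1) (∑ i ∈ Finset.range n, B i)
      (Finset.sum_nonneg fun i _ => hB i)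
    intro j
    have hh := hnorm_pos s hs (j + 2)
    have heq : ∀ i < n, EqOn (fun x => V i x * gegen (s + 1 / 2) (j + 2) x * (1 - x ^ 2) ^ s)
        (fun x => v x * gegen (s + 1 / 2) (j + 2) x * (1 - x ^ 2) ^ s)
        (Ioo (a i) (a (i + 1))) := by
      intro i hi x hx
      simp only [hvV i hi x hx]
    have hpiece_int : ∀ i < n, IntervalIntegrable
        (fun x => v x * gegen (s + 1 / 2) (j + 2) x * (1 - x ^ 2) ^ s) volume (a i) (a (i + 1)) := by
      intro i hi
      refine IntervalIntegrable.congr_uIoo ?_ (by rw [uIoo_of_le (hm i hi).le]; exact heq i hi)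
      apply wpint s (by linarith) (hr i) (hr (i + 1))
      rw [uIcc_of_le (hm i hi).le]
      exact (hV i hi).continuousOn.mul (gegen_continuous _ _).continuousOn
    have hsum := intervalIntegral.sum_integral_adjacent_intervals hpiece_int
    rw [h0, hn] at hsum
    rw [vcoef_eq, ← hsum, abs_div, abs_of_pos hh, div_le_iff₀ hh, zero_add, pow_one]
    calc _ ≤ ∑ i ∈ Finset.range n,
          |∫ x in (a i)..(a (i + 1)), v x * gegen (s + 1 / 2) (j + 2) x * (1 - x ^ 2) ^ s| :=
          Finset.abs_sum_le_sum_abs _ _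
      _ ≤ ∑ i ∈ Finset.range n, B i * (hnorm s (j + 2) / ((j : ℝ) + 2)) := by
          apply Finset.sum_le_sum
          intro i hi
          rw [Finset.mem_range] at hi
          rw [← intervalIntegral.integral_congr_Ioo_of_le (hm i hi).le (heq i hi), ← mul_div_assoc]
          exact hBb i hi j
      _ = _ := by rw [← Finset.sum_mul]; ring
  | succ k ih =>
    intro s hs v V hV hvV hg
    have hg' : ContDiffOn ℝ (k : ℕ) v (Icc (-1 : ℝ) 1) := by simpa using hg (by omega)
    set v' := derivWithin v (Icc (-1 : ℝ) 1) with hv'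
    set V' : ℕ → ℝ → ℝ := fun i => derivWithin (V i) (Icc (a i) (a (i + 1))) with hV'
    have hV'c : ∀ i < n, ContDiffOn ℝ ((k + 1 : ℕ)) (V' i) (Icc (a i) (a (i + 1))) := by
      intro i hi
      exact (hV i hi).derivWithin (uniqueDiffOn_Icc (hm i hi)) (by norm_cast)
    have hder : ∀ i < n, ∀ x ∈ Ioo (a i) (a (i + 1)), HasDerivAt v (V' i x) x ∧ v' x = V' i x := by
      intro i hi x hx
      have d1 : HasDerivAt (V i) (V' i x) x :=
        ((hV i hi).differentiableOn (by simp) x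
          (Ioo_subset_Icc_self hx)).hasDerivWithinAt.hasDerivAt (Icc_mem_nhds hx.1 hx.2)
      have d2 : HasDerivAt v (V' i x) x := by
        apply d1.congr_of_eventuallyEq
        filter_upwards [Ioo_mem_nhds hx.1 hx.2] with y hy using hvV i hi y hy
      refine ⟨d2, ?_⟩
      rw [hv', derivWithin_of_mem_nhds, d2.deriv]
      exact Icc_mem_nhds (lt_of_le_of_lt (hr i).1 hx.1) (lt_of_lt_of_le hx.2 (hr (i + 1)).2)
    obtain ⟨C, hC, hb⟩ := ih (s + 1) (by linarith) v' V' hV'c (fun i hi x hx => (hder i hi x hx).2)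
      (fun hk => hg'.derivWithin (uniqueDiffOn_Icc (by norm_num)) (by
        have : k - 1 + 1 = k := by omega
        exact_mod_cast this.le))
    apply shift_bound (vcoef s v) (k + 1 + 1) (C * 2 ^ (k + 1)) (by positivity)
    intro j
    have hh := hnorm_pos s hs (j + 2)
    have hh1 := hnorm_pos (s + 1) (by linarith) (j + 1)
    have hc := cj_pos s hs (j + 1)
    have hi : IntervalIntegrable (fun x => v' x * Wf s (j + 1) x) volume (-1) 1 := by
      rw [← h0, ← hn]
      apply IntervalIntegrable.trans_iterate
      intro i hi
      refine IntervalIntegrable.congr_uIoo (f := fun x => V' i x * Wf s (j + 1) x) ?_ ?_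
      · apply ContinuousOn.intervalIntegrable
        rw [uIcc_of_le (hm i hi).le]
        exact (hV'c i hi).continuousOn.mul (Wf_cont s hs _).continuousOn
      · rw [uIoo_of_le (hm i hi).le]
        intro x hx
        simp only [(hder i hi x hx).2]
    have key := ibp s hs (j + 1) (a := -1) (b := 1) (by norm_num) le_rfl le_rfl (f := v) (f' := v')
      (S := range a) (countable_range a) hg'.continuousOn (by
        intro x hx
        obtain ⟨i, hi, hxi⟩ := exists_piece a n x (by rw [h0]; exact hx.1.1) (by rw [hn]; exact hx.1.2)
          (fun i h => hx.2 ⟨i, h.symm⟩)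
        rw [(hder i hi x hxi).2]
        exact (hder i hi x hxi).1) hi
    rw [(Wf_one s hs _).1, (Wf_one s hs _).2, mul_zero, mul_zero, sub_zero, sub_zero] at key
    have k2 : (∫ x in (-1 : ℝ)..1, v' x * Wf s (j + 1) x) =
        vcoef (s + 1) v' (j + 1) * hnorm (s + 1) (j + 1) := by
      rw [vcoef_eq, div_mul_cancel₀ _ hh1.ne']
      simp only [Wf, mul_assoc]
    have k3 : cj s (j + 1) * (vcoef s v (j + 2) * hnorm s (j + 2)) =
        vcoef (s + 1) v' (j + 1) * hnorm (s + 1) (j + 1) := by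
      rw [← k2, ← key, vcoef_eq, div_mul_cancel₀ _ hh.ne']
    have hr := hnorm_ratio s hs (j + 1)
    push_cast at hr
    rw [show (j : ℝ) + 1 + 1 = (j : ℝ) + 2 by ring] at hr
    have k4 : |vcoef s v (j + 2)| * (cj s (j + 1) * hnorm s (j + 2)) ≤
        (C * 2 ^ (k + 1) / ((j : ℝ) + 2) ^ (k + 1 + 1)) * (cj s (j + 1) * hnorm s (j + 2)) := by
      calc |vcoef s v (j + 2)| * (cj s (j + 1) * hnorm s (j + 2))
          = |cj s (j + 1) * (vcoef s v (j + 2) * hnorm s (j + 2))| := by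
            rw [abs_mul, abs_mul, abs_of_pos hc, abs_of_pos hh]; ring
        _ = |vcoef (s + 1) v' (j + 1)| * hnorm (s + 1) (j + 1) := by
            rw [k3, abs_mul, abs_of_pos hh1]
        _ ≤ (C / ((j : ℝ) + 1) ^ (k + 1)) * (cj s (j + 1) * hnorm s (j + 2) / ((j : ℝ) + 2)) :=
            mul_le_mul (hb j) hr hh1.le (by positivity)
        _ ≤ (C / (((j : ℝ) + 2) / 2) ^ (k + 1)) * (cj s (j + 1) * hnorm s (j + 2) / ((j : ℝ) + 2)) := by
            have : (0 : ℝ) ≤ j := j.cast_nonneg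
            gcongr
            linarith
        _ = _ := by rw [div_pow]; field_simp; ring
    exact le_of_mul_le_mul_right k4 (by positivity)


theorem stmt15 (s : ℝ) (hs : -1 / 2 < s) (k : ℕ) (hk : 1 ≤ k)
    (n : ℕ) (hn : 1 ≤ n) (α : Fin (n + 1) → ℝ)
    (hα0 : α 0 = -1) (hα1 : α (Fin.last n) = 1) (hmono : StrictMono α)
    (v : ℝ → ℝ) (vt : Fin n → ℝ → ℝ)
    (hvt : ∀ i : Fin n, ContDiffOn ℝ k (vt i) (Set.Icc (α i.castSucc) (α i.succ)))
    (hv_eq : ∀ i : Fin n, ∀ x ∈ Set.Ioo (α i.castSucc) (α i.succ), v x = vt i x)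
    (hv_glob : 2 ≤ k → ContDiffOn ℝ ((k : ℕ) - 2 : ℕ) v (Set.Icc (-1 : ℝ) 1)) :
    ∃ C > (0 : ℝ), ∀ j : ℕ, 1 ≤ j → |vcoef s v j| ≤ C / (j : ℝ) ^ k := by
  obtain ⟨k, rfl⟩ : ∃ m, k = m + 1 := ⟨k - 1, by omega⟩
  set a : ℕ → ℝ := fun i => α ⟨min i n, by omega⟩ with ha
  set V : ℕ → ℝ → ℝ := fun i => if h : i < n then vt ⟨i, h⟩ else 0 with hV
  have e1 : ∀ i (hi : i < n), a i = α (Fin.castSucc ⟨i, hi⟩) := by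
    intro i hi
    simp only [ha]
    congr 1
    ext
    simp [hi.le]
  have e2 : ∀ i (hi : i < n), a (i + 1) = α (Fin.succ ⟨i, hi⟩) := by
    intro i hi
    simp only [ha]
    congr 1
    ext
    simpa using hi
  have e3 : ∀ i (hi : i < n), V i = vt ⟨i, hi⟩ := by
    intro i hi
    simp [hV, hi]
  obtain ⟨C, hC, h⟩ := main_nat n a
    (by rw [← hα0]; simp only [ha]; congr 1)
    (by rw [← hα1]; simp only [ha]; congr 1; ext; simp)
    (fun i hi => by
      rw [e1 i hi, e2 i hi]
      exact hmono (by simp [Fin.lt_def]))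
    (fun i => by
      constructor
      · rw [← hα0]; exact hmono.monotone (Fin.zero_le _)
      · rw [← hα1]; exact hmono.monotone (Fin.le_last _)) k s hs v V
    (fun i hi => by rw [e1 i hi, e2 i hi, e3 i hi]; exact hvt _)
    (fun i hi => by rw [e1 i hi, e2 i hi, e3 i hi]; exact hv_eq _)
    (fun hk => by simpa using hv_glob (by omega))
  refine ⟨C + 1, by linarith, fun j hj => ?_⟩
  obtain ⟨j, rfl⟩ : ∃ m, j = m + 1 := ⟨j - 1, by omega⟩
  refine (h j).trans ?_
  push_cast
  gcongr
  linarith
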